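/- Let A be a Büchi automaton over a finite alphabet Σ with state type Q, and let V, W be colors in Γ_A. If A accepts some sequence of kind V/W, then A accepts every sequence of kind V/W. -/

import Mathlib

namespace Buechi

/-- Nonempty finite strings over `α`, given as a head together with a tail. -/
abbrev NStr (α : Type*) : Type _ := α × List α

/-- The list of symbols of a nonempty string. -/
def NStr.toList {α : Type*} (s : NStr α) : List α := s.1 :: s.2

/-- Büchi automata over alphabet `α`: a finite type of states, a transition
relation, initial states and accepting states. -/
structure BA (α : Type*) where
  Q : Type
  fin : Fintype Q
  trans : Q → α → Q → Prop
  init : Q → Prop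
  accept : Q → Prop

/-- Büchi acceptance: there is a run starting in an initial state, respecting the
transition relation, and visiting accepting states infinitely often. -/
def BA.Accepts {α : Type*} (M : BA α) (σ : ℕ → α) : Prop :=
  ∃ ρ : ℕ → M.Q, M.init (ρ 0) ∧ (∀ n, M.trans (ρ n) (σ n) (ρ (n + 1))) ∧
    ∀ k, ∃ n, k ≤ n ∧ M.accept (ρ n)

/-- `M.StepsL p x q`: there is a path on the list `x` from `p` to `q` whose
consecutive transitions are labelled by the successive symbols of `x`. -/
def BA.StepsL {α : Type*} (M : BA α) : M.Q → List α → M.Q → Prop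
  | p, [], q => p = q
  | p, a :: x, q => ∃ r, M.trans p a r ∧ M.StepsL r x q

/-- `M.StepsAccL p x q`: there is a path on `x` from `p` to `q` passing through an
accepting state before its last position. -/
def BA.StepsAccL {α : Type*} (M : BA α) : M.Q → List α → M.Q → Prop
  | _, [], _ => False
  | p, a :: x, q => ∃ r, M.trans p a r ∧ ((M.accept p ∧ M.StepsL r x q) ∨ M.StepsAccL r x q)

/-- `p ⇒x q` for a nonempty string `x`. -/
def BA.Steps {α : Type*} (M : BA α) (p : M.Q) (x : NStr α) (q : M.Q) : Prop :=
  M.StepsL p x.toList q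

/-- `p ⇒x! q` for a nonempty string `x`. -/
def BA.StepsAcc {α : Type*} (M : BA α) (p : M.Q) (x : NStr α) (q : M.Q) : Prop :=
  M.StepsAccL p x.toList q

/-- `(x, y)` is a match of `M`: there are states `p`, `q` with `p` initial,
`p ⇒x q` and `q ⇒y! q`. -/
def BA.IsMatch {α : Type*} (M : BA α) (x y : NStr α) : Prop :=
  ∃ p q, M.init p ∧ M.Steps p x q ∧ M.StepsAcc q y q

/-- The ultimately periodic sequence `x·y^ω = x y y y ⋯`. -/
def upSeq {α : Type*} (x y : NStr α) (n : ℕ) : α :=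
  if h : n < x.toList.length then x.toList.get ⟨n, h⟩
  else y.toList.get ⟨(n - x.toList.length) % y.toList.length,
    Nat.mod_lt _ (by simp [NStr.toList])⟩

/-- Starting position of the `n`-th factor of a factorisation `τ`. -/
def facStart {α : Type*} (τ : ℕ → NStr α) : ℕ → ℕ
  | 0 => 0
  | n + 1 => facStart τ n + (τ n).toList.length

/-- `τ` is a factorisation of `σ`: `σ` equals the infinite concatenation
`(τ 0)(τ 1)(τ 2)⋯`. -/
def IsFactorisation {α : Type*} (τ : ℕ → NStr α) (σ : ℕ → α) : Prop :=
  ∀ (n k : ℕ) (h : k < (τ n).toList.length),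
    (τ n).toList.get ⟨k, h⟩ = σ (facStart τ n + k)

/-- The color `γ(x)` of a nonempty string `x` in `Γ_A = Set (Q × Q) × Set (Q × Q)`:
the pair of the relations `⇒x` and `⇒x!`. -/
def BA.gamma {α : Type*} (M : BA α) (x : NStr α) :
    Set (M.Q × M.Q) × Set (M.Q × M.Q) :=
  ({ pq | M.Steps pq.1 x pq.2 }, { pq | M.StepsAcc pq.1 x pq.2 })

/-- `σ` has kind `V/W`: it has a factorisation `τ` with `γ(τ 0) = V` and
`γ(τ n) = W` for all `n ≥ 1`. -/
def BA.HasKind {α : Type*} (M : BA α) (σ : ℕ → α)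
    (V W : Set (M.Q × M.Q) × Set (M.Q × M.Q)) : Prop :=
  ∃ τ : ℕ → NStr α, IsFactorisation τ σ ∧ M.gamma (τ 0) = V ∧ ∀ n ≥ 1, M.gamma (τ n) = W

/-!
Acceptance of a factorised sequence depends only on the colors of the factors. An accepting run,
sampled at the starting positions of the factors, gives states `s 0, s 1, …` such that
`s n ⇒ s (n + 1)` along the `n`-th factor for every `n`, and `s n ⇒! s (n + 1)` for infinitely many
`n`; conversely, paths witnessing these relations glue to an accepting run. Both relations are
recorded in the color, and two sequences of the same kind have factorisations with the same colors.
-/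

section Sequences

open Set Filter

theorem exists_eqOn_Icc_of_strictMono {ι β : Type*} [PartialOrder ι] {f : ℕ → ι} (hf : StrictMono f)
    {r : ℕ → ι → β} (hr : ∀ n, r n (f (n + 1)) = r (n + 1) (f (n + 1))) :
    ∃ ρ : ι → β, ∀ n, EqOn ρ (r n) (Icc (f n) (f (n + 1))) := by
  classical
  let ρ : ι → β := fun i ↦ if h : ∃ n, i ∈ Ico (f n) (f (n + 1)) then r h.choose i else r 0 i
  have eqOn_Ico : ∀ n, EqOn ρ (r n) (Ico (f n) (f (n + 1))) := by
    intro n i hi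
    have h : ∃ n, i ∈ Ico (f n) (f (n + 1)) := ⟨n, hi⟩
    have choose_eq : h.choose = n :=
      hf.monotone.pairwise_disjoint_on_Ico_succ.eq (not_disjoint_iff.2 ⟨i, h.choose_spec, hi⟩)
    simp only [ρ, dif_pos h, choose_eq]
  refine ⟨ρ, fun n i hi ↦ ?_⟩
  obtain hlt | rfl := hi.2.lt_or_eq
  · exact eqOn_Ico n ⟨hi.1, hlt⟩
  · rw [hr]
    exact eqOn_Ico (n + 1) ⟨le_rfl, hf (n + 1).lt_succ_self⟩

theorem exists_ge_mem_Ico_of_strictMono {f : ℕ → ℕ} (hf : StrictMono f) {N m : ℕ}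
    (h : f N ≤ m) : ∃ n ≥ N, m ∈ Ico (f n) (f (n + 1)) := by
  have unbounded : ¬BddAbove (f '' Ici N) := fun hb ↦
    (Ici_infinite N).image hf.injective.injOn hb.finite
  have cover := biUnion_Ici_Ico_map_succ (fun _ hi ↦ hf.monotone hi) unbounded
  obtain ⟨n, hn, hm⟩ := mem_iUnion₂.1 (cover.ge h)
  exact ⟨n, hn, hm⟩

theorem frequently_exists_mem_Ico_iff {f : ℕ → ℕ} (hf : StrictMono f) {p : ℕ → Prop} :
    (∃ᶠ n in atTop, ∃ m ∈ Ico (f n) (f (n + 1)), p m) ↔ ∃ᶠ m in atTop, p m := by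
  simp only [frequently_atTop]
  constructor <;> intro h N
  · obtain ⟨n, hn, m, hm, hp⟩ := h N
    exact ⟨m, (hn.trans hf.le_apply).trans hm.1, hp⟩
  · obtain ⟨m, hm, hp⟩ := h (f N)
    obtain ⟨n, hn, hmn⟩ := exists_ge_mem_Ico_of_strictMono hf hm
    exact ⟨n, hn, m, hmn, hp⟩

end Sequences

section Factorisations

variable {α : Type*}

theorem facStart_strictMono (τ : ℕ → NStr α) : StrictMono (facStart τ) :=
  strictMono_nat_of_lt_succ fun n ↦ Nat.lt_add_of_pos_right (Nat.succ_pos (τ n).2.length)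

theorem IsFactorisation.toList_eq_map_range' {τ : ℕ → NStr α} {σ : ℕ → α}
    (hτ : IsFactorisation τ σ) (n : ℕ) :
    (τ n).toList = (List.range' (facStart τ n) (τ n).toList.length).map σ :=
  List.ext_getElem (by simp) fun k hk _ ↦ by simpa using hτ n k hk

end Factorisations

namespace BA

open Set Filter

variable {α : Type*} {M : BA α} {σ : ℕ → α} {ρ : ℕ → M.Q} {p q : M.Q} {a b n : ℕ}

/-- `ρ` respects the transition relation of `M` on `σ` at the positions in `s`. With `s = Ico a b`
this is a path `ρ a, …, ρ b` along the factor of `σ` at the positions `a ≤ m < b`. -/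
def IsRunOn (M : BA α) (σ : ℕ → α) (ρ : ℕ → M.Q) (s : Set ℕ) : Prop :=
  ∀ m ∈ s, M.trans (ρ m) (σ m) (ρ (m + 1))

theorem IsRunOn.mono {s t : Set ℕ} (h : M.IsRunOn σ ρ t) (hst : s ⊆ t) : M.IsRunOn σ ρ s :=
  fun m hm ↦ h m (hst hm)

theorem IsRunOn.congr {ρ' : ℕ → M.Q} (h : M.IsRunOn σ ρ (Ico a b)) (hρ : EqOn ρ' ρ (Icc a b)) :
    M.IsRunOn σ ρ' (Ico a b) := fun m hm ↦ by
  rw [hρ ⟨hm.1, hm.2.le⟩, hρ ⟨hm.1.trans m.le_succ, hm.2⟩]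
  exact h m hm

theorem IsRunOn.update_left (h : M.IsRunOn σ ρ (Ico (a + 1) b))
    (hp : M.trans p (σ a) (ρ (a + 1))) : M.IsRunOn σ (Function.update ρ a p) (Ico a b) := by
  rintro m ⟨ham, hmb⟩
  rw [Function.update_of_ne (by omega : m + 1 ≠ a)]
  obtain rfl | ham := ham.eq_or_lt
  · rwa [Function.update_self]
  · rw [Function.update_of_ne ham.ne']
    exact h m ⟨ham, hmb⟩

theorem stepsL_map_range'_iff :
    M.StepsL p ((List.range' a n).map σ) q ↔
      ∃ ρ, M.IsRunOn σ ρ (Ico a (a + n)) ∧ ρ a = p ∧ ρ (a + n) = q := by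
  induction n generalizing a p with
  | zero =>
    simp only [List.range'_zero, List.map_nil, StepsL, Nat.add_zero]
    constructor
    · rintro rfl
      exact ⟨fun _ ↦ p, by simp [IsRunOn], rfl, rfl⟩
    · rintro ⟨ρ, -, rfl, rfl⟩
      rfl
  | succ n ih =>
    simp only [List.range'_succ, List.map_cons, StepsL, ih, ← Nat.add_assoc,
      Nat.add_right_comm a 1 n]
    constructor
    · rintro ⟨_, hp, ρ, hρ, rfl, rfl⟩
      exact ⟨Function.update ρ a p, hρ.update_left hp, Function.update_self ..,
        Function.update_of_ne (by omega) ..⟩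
    · rintro ⟨ρ, hρ, rfl, rfl⟩
      exact ⟨ρ (a + 1), hρ a ⟨le_rfl, by omega⟩, ρ, hρ.mono (Ico_subset_Ico_left a.le_succ),
        rfl, rfl⟩

theorem stepsAccL_map_range'_iff :
    M.StepsAccL p ((List.range' a n).map σ) q ↔
      ∃ ρ, M.IsRunOn σ ρ (Ico a (a + n)) ∧ ρ a = p ∧ ρ (a + n) = q ∧
        ∃ m ∈ Ico a (a + n), M.accept (ρ m) := by
  induction n generalizing a p with
  | zero => simp [StepsAccL]
  | succ n ih =>
    simp only [List.range'_succ, List.map_cons, StepsAccL, ih, stepsL_map_range'_iff,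
      ← Nat.add_assoc, Nat.add_right_comm a 1 n]
    constructor
    · rintro ⟨_, hp, ⟨hacc, ρ, hρ, rfl, rfl⟩ | ⟨ρ, hρ, rfl, rfl, m, hm, hacc⟩⟩
      · refine ⟨Function.update ρ a p, hρ.update_left hp, Function.update_self ..,
          Function.update_of_ne (by omega) .., a, ⟨le_rfl, by omega⟩, ?_⟩
        rwa [Function.update_self]
      · refine ⟨Function.update ρ a p, hρ.update_left hp, Function.update_self ..,
          Function.update_of_ne (by omega) .., m, Ico_subset_Ico_left a.le_succ hm, ?_⟩
        rwa [Function.update_of_ne (Nat.ne_of_gt hm.1)]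
    · rintro ⟨ρ, hρ, rfl, rfl, m, ⟨ham, hmb⟩, hacc⟩
      have tail := hρ.mono (Ico_subset_Ico_left a.le_succ)
      refine ⟨ρ (a + 1), hρ a ⟨le_rfl, by omega⟩, ?_⟩
      obtain rfl | ham := ham.eq_or_lt
      · exact Or.inl ⟨hacc, ρ, tail, rfl, rfl⟩
      · exact Or.inr ⟨ρ, tail, rfl, rfl, m, ⟨ham, hmb⟩, hacc⟩

theorem mem_gamma_fst_iff {τ : ℕ → NStr α} (hτ : IsFactorisation τ σ) :
    (p, q) ∈ (M.gamma (τ n)).1 ↔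
      ∃ ρ, M.IsRunOn σ ρ (Ico (facStart τ n) (facStart τ (n + 1))) ∧
        ρ (facStart τ n) = p ∧ ρ (facStart τ (n + 1)) = q := by
  change M.StepsL p (τ n).toList q ↔ _
  rw [hτ.toList_eq_map_range' n]
  exact stepsL_map_range'_iff

theorem mem_gamma_snd_iff {τ : ℕ → NStr α} (hτ : IsFactorisation τ σ) :
    (p, q) ∈ (M.gamma (τ n)).2 ↔
      ∃ ρ, M.IsRunOn σ ρ (Ico (facStart τ n) (facStart τ (n + 1))) ∧
        ρ (facStart τ n) = p ∧ ρ (facStart τ (n + 1)) = q ∧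
        ∃ m ∈ Ico (facStart τ n) (facStart τ (n + 1)), M.accept (ρ m) := by
  change M.StepsAccL p (τ n).toList q ↔ _
  rw [hτ.toList_eq_map_range' n]
  exact stepsAccL_map_range'_iff

/-- Acceptance of a sequence `c` of colors: some sequence of states, starting in an initial one, has
all its steps in the relations `(c n).1` and infinitely many of them in `(c n).2`. When `c` lists
the colors of the factors of `σ`, this is acceptance of `σ` seen at the factor boundaries only. -/
def AcceptsColors (M : BA α) (c : ℕ → Set (M.Q × M.Q) × Set (M.Q × M.Q)) : Prop :=
  ∃ s : ℕ → M.Q, M.init (s 0) ∧ (∀ n, (s n, s (n + 1)) ∈ (c n).1) ∧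
    ∃ᶠ n in atTop, (s n, s (n + 1)) ∈ (c n).2

theorem Accepts.acceptsColors {τ : ℕ → NStr α} (hτ : IsFactorisation τ σ) (h : M.Accepts σ) :
    M.AcceptsColors fun n ↦ M.gamma (τ n) := by
  obtain ⟨ρ, hinit, hrun, hacc⟩ := h
  have run_on : ∀ s, M.IsRunOn σ ρ s := fun _ m _ ↦ hrun m
  refine ⟨fun n ↦ ρ (facStart τ n), hinit,
    fun n ↦ (mem_gamma_fst_iff hτ).2 ⟨ρ, run_on _, rfl, rfl⟩, ?_⟩
  refine ((frequently_exists_mem_Ico_iff (facStart_strictMono τ)).2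
    (frequently_atTop.2 hacc)).mono fun n visit ↦ ?_
  exact (mem_gamma_snd_iff hτ).2 ⟨ρ, run_on _, rfl, rfl, visit⟩

theorem AcceptsColors.accepts {τ : ℕ → NStr α} (hτ : IsFactorisation τ σ)
    (h : M.AcceptsColors fun n ↦ M.gamma (τ n)) : M.Accepts σ := by
  obtain ⟨s, hinit, hsteps, hfreq⟩ := h
  let I : ℕ → Set ℕ := fun n ↦ Ico (facStart τ n) (facStart τ (n + 1))
  have exists_path : ∀ n, ∃ r : ℕ → M.Q, M.IsRunOn σ r (I n) ∧
      r (facStart τ n) = s n ∧ r (facStart τ (n + 1)) = s (n + 1) ∧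
      ((s n, s (n + 1)) ∈ (M.gamma (τ n)).2 → ∃ m ∈ I n, M.accept (r m)) := by
    intro n
    by_cases hn : (s n, s (n + 1)) ∈ (M.gamma (τ n)).2
    · obtain ⟨r, hr, hleft, hright, visit⟩ := (mem_gamma_snd_iff hτ).1 hn
      exact ⟨r, hr, hleft, hright, fun _ ↦ visit⟩
    · obtain ⟨r, hr, hleft, hright⟩ := (mem_gamma_fst_iff hτ).1 (hsteps n)
      exact ⟨r, hr, hleft, hright, fun hn' ↦ absurd hn' hn⟩
  choose r hr hleft hright hvisit using exists_path
  obtain ⟨ρ, hρ⟩ := exists_eqOn_Icc_of_strictMono (facStart_strictMono τ)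
    fun n ↦ (hright n).trans (hleft (n + 1)).symm
  have zero_mem : 0 ∈ Icc (facStart τ 0) (facStart τ 1) := ⟨le_rfl, Nat.zero_le _⟩
  refine ⟨ρ, ?_, fun m ↦ ?_, frequently_atTop.1 ?_⟩
  · rwa [hρ 0 zero_mem, show r 0 0 = s 0 from hleft 0]
  · obtain ⟨n, -, hm⟩ :=
      exists_ge_mem_Ico_of_strictMono (N := 0) (facStart_strictMono τ) m.zero_le
    exact (hr n).congr (hρ n) m hm
  · refine (frequently_exists_mem_Ico_iff (facStart_strictMono τ)).1 (hfreq.mono fun n hn ↦ ?_)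
    obtain ⟨m, hm, hacc⟩ := hvisit n hn
    exact ⟨m, hm, by rwa [hρ n (Ico_subset_Icc_self hm)]⟩

theorem HasKind.accepts_iff {V W : Set (M.Q × M.Q) × Set (M.Q × M.Q)} (h : M.HasKind σ V W) :
    M.Accepts σ ↔ M.AcceptsColors fun n ↦ if n = 0 then V else W := by
  obtain ⟨τ, hτ, hV, hW⟩ := h
  have colors_eq : (fun n ↦ M.gamma (τ n)) = fun n ↦ if n = 0 then V else W := by
    funext n
    split_ifs with hn
    · rw [hn, hV]
    · exact hW n (Nat.one_le_iff_ne_zero.2 hn)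
  rw [← colors_eq]
  exact ⟨Accepts.acceptsColors hτ, AcceptsColors.accepts hτ⟩

end BA

theorem kind_compatibility_general {α : Type*} (A : BA α)
    (V W : Set (A.Q × A.Q) × Set (A.Q × A.Q))
    (h : ∃ σ : ℕ → α, A.HasKind σ V W ∧ A.Accepts σ) :
    ∀ σ : ℕ → α, A.HasKind σ V W → A.Accepts σ := by
  obtain ⟨σ, hσ, hacc⟩ := h
  exact fun σ' hσ' ↦ hσ'.accepts_iff.2 (hσ.accepts_iff.1 hacc)

/-- If a Büchi automaton accepts some sequence of kind `V/W`, then it accepts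
every sequence of kind `V/W`. -/
theorem kind_compatibility {α : Type*} [Fintype α] (A : BA α)
    (V W : Set (A.Q × A.Q) × Set (A.Q × A.Q))
    (h : ∃ σ : ℕ → α, A.HasKind σ V W ∧ A.Accepts σ) :
    ∀ σ : ℕ → α, A.HasKind σ V W → A.Accepts σ :=
  kind_compatibility_general A V W h

end Buechi
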